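/- arXiv:0706.3627 — 2 statements merged into one kernel-verified Lean document; each statement's English description precedes it below -/
import Mathlib

section
/- Let h > 0 and c ∈ ℂ, and define e_c^{(1,h)}(x) := h^c·Γ(1+c−x/h)/Γ(1−x/h), where Γ is the complex Gamma function and h^c := exp(c·ln h). Then for every x ∈ ℂ such that neither 1 − x/h nor 1 + c − x/h is a nonpositive integer, one has ((x−h)/h)·(e_c^{(1,h)}(x) − e_c^{(1,h)}(x−h)) = c·e_c^{(1,h)}(x), i.e. δ_{1,h}(e_c^{(1,h)})(x) = c·e_c^{(1,h)}(x). -/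
open Complex Filter

noncomputable section

/-- The character `e_c^{(1,h)}(x) = h^c·Γ(1+c-x/h)/Γ(1-x/h)`, with `h^c := exp(c·ln h)`. -/
def egam (h : ℝ) (c : ℂ) (x : ℂ) : ℂ :=
  Complex.exp (c * Real.log h) * Complex.Gamma (1 + c - x / (h : ℂ)) /
    Complex.Gamma (1 - x / (h : ℂ))

section deltaOne

variable {K : Type*} [Field K]

/-- The operator `δ_{1,h}`, over any field. -/
def deltaOne (h : K) (f : K → K) (x : K) : K :=
  (x - h) / h * (f x - f (x - h))

theorem deltaOne_const_mul (h a : K) (f : K → K) (x : K) :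
    deltaOne h (fun y ↦ a * f y) x = a * deltaOne h f x := by
  unfold deltaOne
  ring

theorem deltaOne_comp_one_sub_div {h : K} (hh : h ≠ 0) (f : K → K) (x : K) :
    deltaOne h (fun y ↦ f (1 - y / h)) x =
      (1 - x / h) * (f (1 - x / h + 1) - f (1 - x / h)) := by
  have hshift : (x - h) / h = x / h - 1 := by rw [sub_div, div_self hh]
  have harg : 1 - (x / h - 1) = 1 - x / h + 1 := by ring
  simp only [deltaOne, hshift, harg]
  ring

end deltaOne

/-- The Pochhammer symbol `(s)_c = Γ(s + c) / Γ(s)` with complex index `c`. At the poles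
`s = 0, -1, -2, …` of the denominator, the conventions `Γ(s) = 0` and `z / 0 = 0` give the entire
function `1 / Γ` its true value `0`. -/
def pochhammerSymbol (s c : ℂ) : ℂ :=
  Gamma (s + c) / Gamma s

theorem mul_pochhammerSymbol_add_one {s c : ℂ} (hsc : s + c ≠ 0) :
    s * pochhammerSymbol (s + 1) c = (s + c) * pochhammerSymbol s c := by
  unfold pochhammerSymbol
  calc s * (Gamma (s + 1 + c) / Gamma (s + 1))
      = Gamma (s + c + 1) * (s * (Gamma (s + 1))⁻¹) := by
        rw [add_right_comm s 1 c]
        ring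
    _ = (s + c) * Gamma (s + c) * (Gamma s)⁻¹ := by
        rw [Gamma_add_one _ hsc, ← one_div_Gamma_eq_self_mul_one_div_Gamma_add_one]
    _ = (s + c) * (Gamma (s + c) / Gamma s) := by ring

theorem mul_pochhammerSymbol_add_one_sub {s c : ℂ} (hsc : s + c ≠ 0) :
    s * (pochhammerSymbol (s + 1) c - pochhammerSymbol s c) = c * pochhammerSymbol s c := by
  rw [mul_sub, mul_pochhammerSymbol_add_one hsc]
  ring

/-- In the coordinate `s = 1 - x / h` the shift `x ↦ x - h` becomes `s ↦ s + 1`, which turns the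
equation into the recurrence of the Pochhammer symbol. -/
theorem egam_character_equation_general {h : ℂ} (hh : h ≠ 0) (a c x : ℂ)
    (hx : ∀ n : ℕ, 1 + c - x / h ≠ -(n : ℂ)) :
    deltaOne h (fun y ↦ a * Gamma (1 + c - y / h) / Gamma (1 - y / h)) x =
      c * (a * Gamma (1 + c - x / h) / Gamma (1 - x / h)) := by
  have hsc : 1 - x / h + c ≠ 0 := by simpa [sub_add_eq_add_sub] using hx 0
  have hchar (y : ℂ) : a * Gamma (1 + c - y / h) / Gamma (1 - y / h) =
      a * pochhammerSymbol (1 - y / h) c := by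
    rw [pochhammerSymbol, sub_add_eq_add_sub, mul_div_assoc]
  simp only [hchar]
  rw [deltaOne_const_mul, deltaOne_comp_one_sub_div hh (pochhammerSymbol · c),
    mul_pochhammerSymbol_add_one_sub hsc, mul_left_comm]

/-- The character equation for `q = 1`, `h > 0`:
`δ_{1,h}(e_c^{(1,h)})(x) = ((x-h)/h)·(e_c^{(1,h)}(x) - e_c^{(1,h)}(x-h)) = c·e_c^{(1,h)}(x)`. -/
theorem egam_character_equation (h : ℝ) (hh : 0 < h) (c : ℂ) (x : ℂ)
    (hx1 : ∀ n : ℕ, 1 - x / (h : ℂ) ≠ -(n : ℂ))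
    (hx2 : ∀ n : ℕ, 1 + c - x / (h : ℂ) ≠ -(n : ℂ)) :
    ((x - (h : ℂ)) / (h : ℂ)) * (egam h c x - egam h c (x - (h : ℂ))) = c * egam h c x :=
  egam_character_equation_general (mod_cast hh.ne') _ c x hx2
end
end

section
/- Let q₀ > 1, p₀ := 1/q₀, c ∈ ℂ, q₀^c := exp(c·ln q₀), ξ ∈ [0,1), and set h_n := (1−p₀)·p₀^{ξ+n} for n ∈ ℕ. Then, as n → ∞, the functions e_c^{(q₀,h_n)} converge, uniformly on every compact subset of ℂ ∖ {q₀^c·t : t ∈ [0,∞)}, to the function x ↦ p₀^{ξc}·Θ_{q₀}(p₀^{−ξ}·x)/Θ_{q₀}(p₀^{c−ξ}·x), where p₀^{ξc} := exp(ξ·c·ln p₀) and p₀^{c−ξ} := exp((c−ξ)·ln p₀). -/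
/-!
Put `p = q₀⁻¹`, `a = p ^ c`, and let `(x; p)_∞` be the infinite `p`-Pochhammer symbol. At
`h = (1 - p) p ^ (ξ + n)` one has `z(x) = u / p ^ n` with `u = p ^ (-ξ) x + p ^ (n + 1)`, and the
character is `p ^ (ξ c) a ^ n (z; p)_∞ / (a z; p)_∞`. Reversing the first `n` factors gives
`(u / p ^ n; p)_∞ = (-u) ^ n p ^ (-n(n+1)/2) (p / u; p)_n (u; p)_∞`, so that `a ^ n` cancels in the
quotient, and the truncated products tend to `(u; p)_∞ (p / u; p)_∞`. By the Jacobi triple product,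
obtained as the limit of the `q`-binomial theorem, this product is a constant multiple of
`Θ_{q₀}(u)`, with zeros exactly at the integral powers of `p`. The limits are taken jointly in `n`
and the space variable, which makes the convergence locally uniform away from the zeros of the
denominator.
-/

open Complex Filter

noncomputable section

/-- `z(x) = (1-p)x/h + p` with `p = 1/q`. -/
def zc (q h : ℝ) (x : ℂ) : ℂ := (1 - (q : ℂ)⁻¹) * x / (h : ℂ) + (q : ℂ)⁻¹

/-- The `j`-th factor of the infinite product defining `e_c^{(q,h)}`. -/
def charTerm (q h : ℝ) (c : ℂ) (x : ℂ) (j : ℕ) : ℂ :=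
  (1 - (q : ℂ)⁻¹ ^ j * zc q h x) / (1 - Complex.exp (((j : ℂ) + c) * Real.log q⁻¹) * zc q h x)

/-- The character `e_c^{(q,h)}` for `q > 1`, `h > 0`. -/
def echar (q h : ℝ) (c : ℂ) (x : ℂ) : ℂ :=
  ((h / (1 - q⁻¹) : ℝ) : ℂ) ^ c * ∏' j : ℕ, charTerm q h c x j

/-- Jacobi theta function `Θ_q(x) = Σ_{n∈ℤ} (-1)^n q^{-n(n-1)/2} x^n`. -/
def theta (q : ℝ) (x : ℂ) : ℂ :=
  ∑' n : ℤ, (-1 : ℂ) ^ n * ((q : ℂ) ^ (-(n * (n - 1) / 2)) : ℂ) * x ^ n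

open scoped Topology

section LocallyUniformConvergence

variable {ι α β : Type*} [TopologicalSpace α] {F : ι → α → β} {f : α → β} {l : Filter ι}
  {s : Set α}

lemma continuousOn_of_forall_tendsto_prod [l.NeBot] [TopologicalSpace β] [RegularSpace β]
    (h : ∀ x ∈ s, Tendsto (fun v : ι × α => F v.1 v.2) (l ×ˢ 𝓝[s] x) (𝓝 (f x))) :
    ContinuousOn f s := by
  intro x hx
  refine (closed_nhds_basis (f x)).tendsto_right_iff.2 fun V ⟨hV, hVc⟩ => ?_
  have hF : ∀ᶠ y in 𝓝[s] x, ∀ᶠ i in l, F i y ∈ V :=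
    (tendsto_prod_swap.eventually ((h x hx).eventually_mem hV)).curry
  filter_upwards [hF, self_mem_nhdsWithin] with y hy hys
  have hFy : Tendsto (fun i => F i y) l (𝓝 (f y)) :=
    (h y hys).comp (tendsto_id.prodMk (tendsto_const_pure.mono_right (pure_le_nhdsWithin hys)))
  exact hVc.mem_of_tendsto hFy hy

lemma tendstoLocallyUniformlyOn_of_forall_tendsto_prod [l.NeBot] [UniformSpace β]
    (h : ∀ x ∈ s, Tendsto (fun v : ι × α => F v.1 v.2) (l ×ˢ 𝓝[s] x) (𝓝 (f x))) :
    TendstoLocallyUniformlyOn F f l s :=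
  tendstoLocallyUniformlyOn_iff_forall_tendsto.2 fun x hx =>
    (((continuousOn_of_forall_tendsto_prod h x hx).tendsto.comp tendsto_snd).prodMk_nhds
      (h x hx)).mono_right (nhds_le_uniformity _)

end LocallyUniformConvergence

section FiniteProducts

section CommRing

variable {R : Type*} [CommRing R]

/-- The finite `q`-Pochhammer symbol `(a; q)_n`. -/
def qPochhammer (a q : R) (n : ℕ) : R := ∏ i ∈ Finset.range n, (1 - a * q ^ i)

/-- The Gaussian binomial coefficient `[N, k]_q`, defined by its Pascal rule, so that it makes
sense in every commutative ring. -/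
def gaussBinom (q : R) : ℕ → ℕ → R
  | _, 0 => 1
  | 0, _ + 1 => 0
  | N + 1, k + 1 => gaussBinom q N k + q ^ (k + 1) * gaussBinom q N (k + 1)

@[simp]
lemma qPochhammer_zero (a q : R) : qPochhammer a q 0 = 1 := Finset.prod_range_zero _

lemma qPochhammer_succ (a q : R) (n : ℕ) :
    qPochhammer a q (n + 1) = qPochhammer a q n * (1 - a * q ^ n) :=
  Finset.prod_range_succ _ _

lemma qPochhammer_add (a q : R) (m n : ℕ) :
    qPochhammer a q (m + n) = qPochhammer a q m * qPochhammer (a * q ^ m) q n := by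
  simp only [qPochhammer, Finset.prod_range_add, pow_add, mul_assoc]

lemma qPochhammer_succ' (a q : R) (n : ℕ) :
    qPochhammer a q (n + 1) = (1 - a) * qPochhammer (a * q) q n := by
  rw [add_comm, qPochhammer_add, qPochhammer_succ]
  simp

@[simp]
lemma gaussBinom_zero_right (q : R) (N : ℕ) : gaussBinom q N 0 = 1 := by
  cases N <;> rfl

lemma gaussBinom_succ_succ (q : R) (N k : ℕ) :
    gaussBinom q (N + 1) (k + 1) = gaussBinom q N k + q ^ (k + 1) * gaussBinom q N (k + 1) :=
  rfl

lemma gaussBinom_eq_zero_of_lt (q : R) {N k : ℕ} (h : N < k) : gaussBinom q N k = 0 := by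
  induction N generalizing k with
  | zero => obtain ⟨k, rfl⟩ := Nat.exists_eq_add_of_lt h; rfl
  | succ N ih =>
    obtain ⟨k, rfl⟩ := Nat.exists_eq_succ_of_ne_zero (Nat.ne_zero_of_lt h)
    rw [gaussBinom_succ_succ, ih (by lia), ih (by lia), mul_zero, add_zero]

@[simp]
lemma gaussBinom_self (q : R) (N : ℕ) : gaussBinom q N N = 1 := by
  induction N with
  | zero => rfl
  | succ N ih =>
    rw [gaussBinom_succ_succ, ih, gaussBinom_eq_zero_of_lt q N.lt_succ_self, mul_zero, add_zero]

lemma gaussBinom_mul_qPochhammer_mul_qPochhammer (q : R) (a b : ℕ) :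
    gaussBinom q (a + b) a * qPochhammer q q a * qPochhammer q q b = qPochhammer q q (a + b) := by
  induction a generalizing b with
  | zero => simp
  | succ a iha =>
    induction b with
    | zero => simp
    | succ b ihb =>
      have hleft := iha (b + 1)
      rw [← add_assoc] at hleft
      rw [add_right_comm] at ihb
      rw [show a + 1 + (b + 1) = a + b + 1 + 1 by ring, gaussBinom_succ_succ,
        qPochhammer_succ q q (a + b + 1)]
      rw [qPochhammer_succ q q b] at hleft ⊢
      rw [qPochhammer_succ q q a] at ihb ⊢
      linear_combination (1 - q * q ^ a) * hleft + q ^ (a + 1) * (1 - q * q ^ b) * ihb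

theorem qPochhammer_eq_sum_gaussBinom (x q : R) (N : ℕ) :
    qPochhammer x q N =
      ∑ k ∈ Finset.range (N + 1), gaussBinom q N k * ((-1) ^ k * q ^ k.choose 2 * x ^ k) := by
  induction N generalizing x with
  | zero => simp
  | succ N ih =>
    set t : ℕ → R := fun k => (-1) ^ k * q ^ k.choose 2 * x ^ k with ht
    have ht_succ (k : ℕ) : t (k + 1) = -(x * q ^ k * t k) := by
      simp only [ht, Nat.choose_succ_succ' k 1, Nat.choose_one_right]
      ring
    have hshift : qPochhammer (x * q) q N =
        ∑ k ∈ Finset.range (N + 1), gaussBinom q N k * (q ^ k * t k) := by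
      rw [ih]
      refine Finset.sum_congr rfl fun k _ => ?_
      simp only [ht]
      ring
    have hsplit := (Finset.sum_range_succ' (fun k => gaussBinom q N k * (q ^ k * t k)) (N + 1)).symm
    rw [Finset.sum_range_succ _ (N + 1), gaussBinom_eq_zero_of_lt q N.lt_succ_self, zero_mul,
      add_zero, ← hshift] at hsplit
    have hpascal : ∑ k ∈ Finset.range (N + 1), gaussBinom q (N + 1) (k + 1) * t (k + 1) =
        -(x * qPochhammer (x * q) q N) +
          ∑ k ∈ Finset.range (N + 1), gaussBinom q N (k + 1) * (q ^ (k + 1) * t (k + 1)) := by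
      rw [hshift, Finset.mul_sum, ← Finset.sum_neg_distrib, ← Finset.sum_add_distrib]
      refine Finset.sum_congr rfl fun k _ => ?_
      rw [gaussBinom_succ_succ, ht_succ]
      ring
    rw [qPochhammer_succ', Finset.sum_range_succ', hpascal]
    simp only [gaussBinom_zero_right, pow_zero, one_mul] at hsplit ⊢
    linear_combination -hsplit

end CommRing

lemma natCast_choose_two_mul_two (n : ℕ) : (n.choose 2 : ℤ) * 2 = n * (n - 1) := by
  induction n with
  | zero => simp
  | succ n ih =>
    rw [Nat.choose_succ_succ' n 1, Nat.choose_one_right]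
    push_cast
    linear_combination ih

section Field

variable {𝕜 : Type*} [Field 𝕜] {q x : 𝕜}

/-- The general term `(-1)^m q^{m(m-1)/2} x^m` of the theta series with nome `q`. -/
def jacobiTerm (q x : 𝕜) (m : ℤ) : 𝕜 := (-1) ^ m * q ^ (m * (m - 1) / 2) * x ^ m

lemma jacobiTerm_neg (hq : q ≠ 0) (x : 𝕜) (m : ℤ) :
    jacobiTerm q x (-m) = jacobiTerm q (q / x) m := by
  have hexp : -m * (-m - 1) / 2 = m * (m - 1) / 2 + m := by
    rw [← Int.add_mul_ediv_right _ _ two_ne_zero]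
    ring_nf
  rw [jacobiTerm, jacobiTerm, hexp, zpow_add₀ hq, div_zpow, zpow_neg, zpow_neg, ← inv_zpow,
    inv_neg_one]
  ring

lemma jacobiTerm_natCast_succ (q x : 𝕜) (n : ℕ) :
    jacobiTerm q x (n + 1 : ℕ) = -(q ^ n * x * jacobiTerm q x n) := by
  have hexp (k : ℕ) : (k : ℤ) * (k - 1) / 2 = (k.choose 2 : ℕ) := by
    rw [← natCast_choose_two_mul_two, Int.mul_ediv_cancel _ two_ne_zero]
  rw [jacobiTerm, jacobiTerm, hexp, hexp, Nat.choose_succ_succ' n 1, Nat.choose_one_right]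
  simp only [zpow_natCast]
  ring

/-- Reversing the order of the factors and pulling `-x / q ^ (k + 1)` out of each of them. -/
lemma qPochhammer_div_pow (hq : q ≠ 0) (hx : x ≠ 0) (n : ℕ) :
    qPochhammer (x / q ^ n) q n =
      (-x) ^ n / q ^ (n + 1).choose 2 * qPochhammer (q / x) q n := by
  induction n with
  | zero => simp
  | succ n ih =>
    have hshift : x / q ^ (n + 1) * q = x / q ^ n := by
      rw [pow_succ]
      field_simp
    rw [qPochhammer_succ', hshift, ih, qPochhammer_succ, Nat.choose_succ_succ' (n + 1) 1,
      Nat.choose_one_right]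
    field_simp
    ring

lemma neg_one_pow_mul_pow_choose_two_mul_div_pow (hq : q ≠ 0) (hx : x ≠ 0) (n k : ℕ) :
    (-1) ^ k * q ^ k.choose 2 * (x / q ^ n) ^ k =
      (-x) ^ n / q ^ (n + 1).choose 2 * jacobiTerm q x (k - n) := by
  have hexp : ((k : ℤ) - n) * (k - n - 1) / 2 =
      k.choose 2 + (n + 1).choose 2 - (n * k : ℕ) := by
    refine Int.ediv_eq_of_eq_mul_left two_ne_zero ?_
    have hn := natCast_choose_two_mul_two (n + 1)
    push_cast at hn ⊢
    linear_combination -natCast_choose_two_mul_two k - hn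
  have hneg : (-1 : 𝕜) ≠ 0 := neg_ne_zero.2 one_ne_zero
  rw [jacobiTerm, hexp, zpow_sub₀ hneg, zpow_sub₀ hq, zpow_add₀ hq, zpow_sub₀ hx, neg_pow x,
    div_pow, ← pow_mul]
  simp only [zpow_natCast]
  field_simp

/-- The finite form of the Jacobi triple product. -/
lemma sum_gaussBinom_mul_jacobiTerm (hq : q ≠ 0) (hx : x ≠ 0) (n : ℕ) :
    ∑ m ∈ Finset.Icc (-n : ℤ) n, gaussBinom q (2 * n) (m + n).toNat * jacobiTerm q x m =
      qPochhammer x q n * qPochhammer (q / x) q n := by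
  have hscale : (-x) ^ n / q ^ (n + 1).choose 2 ≠ 0 :=
    div_ne_zero (pow_ne_zero _ (neg_ne_zero.2 hx)) (pow_ne_zero _ hq)
  have hreindex : ∑ m ∈ Finset.Icc (-n : ℤ) n,
        gaussBinom q (2 * n) (m + n).toNat * jacobiTerm q x m =
      ∑ k ∈ Finset.range (2 * n + 1), gaussBinom q (2 * n) k * jacobiTerm q x (k - n) := by
    refine Finset.sum_nbij' (fun m => (m + n).toNat) (fun k => k - n) ?_ ?_ ?_ ?_ ?_
    · intro m hm; simp only [Finset.mem_Icc, Finset.mem_range] at *; lia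
    · intro k hk; simp only [Finset.mem_Icc, Finset.mem_range] at *; lia
    · intro m hm; simp only [Finset.mem_Icc] at *; lia
    · intro k _; lia
    · intro m hm; simp only [Finset.mem_Icc] at *; congr 2; lia
  have hbinom := qPochhammer_eq_sum_gaussBinom (x / q ^ n) q (2 * n)
  rw [two_mul, qPochhammer_add, div_mul_cancel₀ x (pow_ne_zero n hq), ← two_mul,
    qPochhammer_div_pow hq hx] at hbinom
  simp only [neg_one_pow_mul_pow_choose_two_mul_div_pow hq hx,
    mul_left_comm (gaussBinom _ _ _)] at hbinom
  rw [← Finset.mul_sum, ← hreindex] at hbinom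
  refine mul_left_cancel₀ hscale ?_
  linear_combination -hbinom

end Field

end FiniteProducts

section InfiniteProducts

variable {𝕜 : Type*} [NormedField 𝕜] {a q x : 𝕜}

/-- The infinite `q`-Pochhammer symbol `(a; q)_∞`, meaningful for `‖q‖ < 1`. -/
def qPochhammerInf (a q : 𝕜) : 𝕜 := ∏' i : ℕ, (1 - a * q ^ i)

/-- The product `(x; q)_∞ (q / x; q)_∞`, which the Jacobi triple product identifies with the theta
series of nome `q` up to the constant `(q; q)_∞`. -/
def thetaProd (q x : 𝕜) : 𝕜 := qPochhammerInf x q * qPochhammerInf (q / x) q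

lemma summable_norm_neg_mul_pow (a : 𝕜) (hq : ‖q‖ < 1) : Summable fun i : ℕ => ‖-(a * q ^ i)‖ := by
  simpa only [norm_neg, norm_mul, norm_pow] using
    (summable_geometric_of_lt_one (norm_nonneg q) hq).mul_left ‖a‖

lemma multipliable_one_sub_mul_pow [CompleteSpace 𝕜] (a : 𝕜) (hq : ‖q‖ < 1) :
    Multipliable fun i : ℕ => 1 - a * q ^ i := by
  simpa only [sub_eq_add_neg] using
    multipliable_one_add_of_summable (summable_norm_neg_mul_pow a hq)

lemma qPochhammerInf_ne_zero [CompleteSpace 𝕜] (hq : ‖q‖ < 1) (h : ∀ i : ℕ, a * q ^ i ≠ 1) :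
    qPochhammerInf a q ≠ 0 := by
  simpa only [qPochhammerInf, sub_eq_add_neg] using tprod_one_add_ne_zero_of_summable
    (fun i => by simpa only [← sub_eq_add_neg] using sub_ne_zero.2 (h i).symm)
    (summable_norm_neg_mul_pow a hq)

lemma mul_pow_self_ne_one (hq : ‖q‖ < 1) (i : ℕ) : q * q ^ i ≠ 1 := by
  intro h
  have hlt : ‖q * q ^ i‖ < 1 := by
    rw [← pow_succ', norm_pow]
    exact pow_lt_one₀ (norm_nonneg q) hq i.succ_ne_zero
  rw [h, norm_one] at hlt
  exact lt_irrefl _ hlt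

lemma qPochhammerInf_self_ne_zero [CompleteSpace 𝕜] (hq : ‖q‖ < 1) : qPochhammerInf q q ≠ 0 :=
  qPochhammerInf_ne_zero hq (mul_pow_self_ne_one hq)

lemma qPochhammer_mul_qPochhammerInf [CompleteSpace 𝕜] (a : 𝕜) (hq : ‖q‖ < 1) (n : ℕ) :
    qPochhammer a q n * qPochhammerInf (a * q ^ n) q = qPochhammerInf a q := by
  have hshift (i : ℕ) : 1 - a * q ^ n * q ^ i = 1 - a * q ^ (i + n) := by ring
  simp only [qPochhammer, qPochhammerInf, hshift]
  exact Multipliable.prod_mul_tprod_nat_mul'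
    (by simpa only [hshift] using multipliable_one_sub_mul_pow (a * q ^ n) hq)

lemma thetaProd_ne_zero [CompleteSpace 𝕜] (hq : ‖q‖ < 1) (hx : ∀ m : ℤ, x ≠ q ^ m) :
    thetaProd q x ≠ 0 := by
  refine mul_ne_zero (qPochhammerInf_ne_zero hq fun i h => hx (-i) ?_)
    (qPochhammerInf_ne_zero hq fun i h => hx (i + 1 : ℕ) ?_)
  · rw [zpow_neg, zpow_natCast]
    exact eq_inv_of_mul_eq_one_left h
  · have hx0 : x ≠ 0 := by rintro rfl; simp at h
    rw [zpow_natCast, pow_succ']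
    field_simp at h
    exact h.symm

/-- Dominated convergence, with the missing factors of the finite product replaced by `1`. -/
lemma tendsto_qPochhammer_prod [CompleteSpace 𝕜] (a : 𝕜) (hq : ‖q‖ < 1) :
    Tendsto (fun v : ℕ × 𝕜 => qPochhammer v.2 q v.1) (atTop ×ˢ 𝓝 a) (𝓝 (qPochhammerInf a q)) := by
  have hfinite (v : ℕ × 𝕜) :
      qPochhammer v.2 q v.1 = ∏' i : ℕ, (1 + if i < v.1 then -(v.2 * q ^ i) else 0) := by
    rw [tprod_eq_prod (s := Finset.range v.1) fun i hi => by simp_all]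
    refine Finset.prod_congr rfl fun i hi => ?_
    rw [if_pos (Finset.mem_range.1 hi), sub_eq_add_neg]
  simp only [hfinite, qPochhammerInf, sub_eq_add_neg]
  refine tendsto_tprod_one_add_of_dominated_convergence
    (bound := fun i => (‖a‖ + 1) * ‖q‖ ^ i)
    ((summable_geometric_of_lt_one (norm_nonneg q) hq).mul_left _) (fun i => ?_) ?_
  · refine ((tendsto_snd.mul_const (q ^ i)).neg).congr' ?_
    filter_upwards [tendsto_fst.eventually_gt_atTop i] with v hv
    rw [if_pos hv]
  · have hnorm : ∀ᶠ v : ℕ × 𝕜 in atTop ×ˢ 𝓝 a, ‖v.2‖ < ‖a‖ + 1 :=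
      tendsto_snd.norm.eventually_lt_const (lt_add_one _)
    filter_upwards [hnorm] with v hv i
    split_ifs
    · rw [norm_neg, norm_mul, norm_pow]
      gcongr
    · rw [norm_zero]
      positivity

lemma tendsto_qPochhammer [CompleteSpace 𝕜] (a : 𝕜) (hq : ‖q‖ < 1) :
    Tendsto (qPochhammer a q) atTop (𝓝 (qPochhammerInf a q)) :=
  (multipliable_one_sub_mul_pow a hq).hasProd.tendsto_prod_nat

lemma continuous_qPochhammerInf [CompleteSpace 𝕜] (hq : ‖q‖ < 1) :
    Continuous fun a : 𝕜 => qPochhammerInf a q := by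
  rw [← continuousOn_univ]
  refine continuousOn_of_forall_tendsto_prod (F := fun n a => qPochhammer a q n) (l := atTop)
    fun a _ => ?_
  simpa only [nhdsWithin_univ] using tendsto_qPochhammer_prod a hq

end InfiniteProducts

section JacobiTripleProduct

variable {𝕜 : Type*} [NormedField 𝕜] {q x : 𝕜}

lemma qPochhammer_self_ne_zero (hq : ‖q‖ < 1) (n : ℕ) : qPochhammer q q n ≠ 0 :=
  Finset.prod_ne_zero_iff.2 fun i _ => sub_ne_zero.2 (mul_pow_self_ne_one hq i).symm

lemma gaussBinom_eq_div (hq : ‖q‖ < 1) (a b : ℕ) :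
    gaussBinom q (a + b) a =
      qPochhammer q q (a + b) / (qPochhammer q q a * qPochhammer q q b) := by
  rw [eq_div_iff (mul_ne_zero (qPochhammer_self_ne_zero hq a) (qPochhammer_self_ne_zero hq b)),
    ← mul_assoc, gaussBinom_mul_qPochhammer_mul_qPochhammer]

lemma tendsto_gaussBinom [CompleteSpace 𝕜] (hq : ‖q‖ < 1) {ι : Type*} {l : Filter ι} {a b : ι → ℕ}
    (ha : Tendsto a l atTop) (hb : Tendsto b l atTop) :
    Tendsto (fun i => gaussBinom q (a i + b i) (a i)) l (𝓝 (qPochhammerInf q q)⁻¹) := by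
  have hL := qPochhammerInf_self_ne_zero hq
  have hlim := tendsto_qPochhammer q hq
  simp only [gaussBinom_eq_div hq]
  rw [← div_mul_cancel_left₀ hL]
  exact (hlim.comp (ha.atTop_add_atTop hb)).div ((hlim.comp ha).mul (hlim.comp hb))
    (mul_ne_zero hL hL)

lemma exists_forall_norm_gaussBinom_le [CompleteSpace 𝕜] (hq : ‖q‖ < 1) :
    ∃ C, ∀ N k, ‖gaussBinom q N k‖ ≤ C := by
  have hlim := tendsto_qPochhammer q hq
  obtain ⟨A, hA⟩ := (Metric.isBounded_range_of_tendsto _ hlim).exists_norm_le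
  obtain ⟨B, hB⟩ := (Metric.isBounded_range_of_tendsto _
    (hlim.inv₀ (qPochhammerInf_self_ne_zero hq))).exists_norm_le
  simp only [Set.forall_mem_range] at hA hB
  have hA0 : 0 ≤ A := (norm_nonneg _).trans (hA 0)
  have hB0 : 0 ≤ B := (norm_nonneg _).trans (hB 0)
  refine ⟨A * (B * B), fun N k => ?_⟩
  rcases lt_or_ge N k with hlt | hle
  · rw [gaussBinom_eq_zero_of_lt q hlt, norm_zero]
    positivity
  · obtain ⟨b, rfl⟩ := Nat.exists_eq_add_of_le hle
    rw [gaussBinom_eq_div hq, div_eq_mul_inv, mul_inv, norm_mul, norm_mul]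
    gcongr
    exacts [hA _, hB _, hB _]

lemma summable_norm_jacobiTerm_natCast (hq : ‖q‖ < 1) (x : 𝕜) :
    Summable fun n : ℕ => ‖jacobiTerm q x n‖ := by
  have hratio : Tendsto (fun n : ℕ => ‖q‖ ^ n * ‖x‖) atTop (𝓝 0) := by
    simpa only [zero_mul] using
      (tendsto_pow_atTop_nhds_zero_of_lt_one (norm_nonneg q) hq).mul_const ‖x‖
  refine summable_of_ratio_norm_eventually_le (r := 1 / 2) (by norm_num) ?_
  filter_upwards [hratio.eventually_le_const (by norm_num : (0 : ℝ) < 1 / 2)] with n hn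
  rw [norm_norm, norm_norm, jacobiTerm_natCast_succ, norm_neg, norm_mul, norm_mul, norm_pow]
  gcongr

lemma summable_norm_jacobiTerm (hq0 : q ≠ 0) (hq : ‖q‖ < 1) (x : 𝕜) :
    Summable fun m : ℤ => ‖jacobiTerm q x m‖ :=
  Summable.of_nat_of_neg (summable_norm_jacobiTerm_natCast hq x) <| by
    simpa only [jacobiTerm_neg hq0] using summable_norm_jacobiTerm_natCast hq (q / x)

/-- The limit `n → ∞` of the finite form, under the sum sign by dominated convergence. -/
theorem tsum_jacobiTerm [CompleteSpace 𝕜] (hq0 : q ≠ 0) (hq : ‖q‖ < 1) (hx : x ≠ 0) :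
    ∑' m, jacobiTerm q x m = qPochhammerInf q q * thetaProd q x := by
  obtain ⟨C, hC⟩ := exists_forall_norm_gaussBinom_le hq
  have hsum : Tendsto (fun n : ℕ => ∑ m ∈ Finset.Icc (-n : ℤ) n,
        gaussBinom q (2 * n) (m + n).toNat * jacobiTerm q x m) atTop
      (𝓝 (∑' m, (qPochhammerInf q q)⁻¹ * jacobiTerm q x m)) := by
    simp only [sum_eq_tsum_indicator (L := .unconditional ℤ)]
    refine tendsto_tsum_of_dominated_convergence
      ((summable_norm_jacobiTerm hq0 hq x).mul_left C) (fun m => ?_)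
      (Eventually.of_forall fun n m => ?_)
    · have hleft : Tendsto (fun n : ℕ => (m + n).toNat) atTop atTop :=
        tendsto_atTop.2 fun b => (eventually_ge_atTop (b + m.natAbs)).mono fun n hn => by lia
      have hright : Tendsto (fun n : ℕ => (n - m).toNat) atTop atTop :=
        tendsto_atTop.2 fun b => (eventually_ge_atTop (b + m.natAbs)).mono fun n hn => by lia
      refine ((tendsto_gaussBinom hq hleft hright).mul_const _).congr' ?_
      filter_upwards [eventually_ge_atTop m.natAbs] with n hn
      have hmem : m ∈ (Finset.Icc (-n : ℤ) n : Set ℤ) := by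
        rw [Finset.coe_Icc, Set.mem_Icc]
        lia
      rw [Set.indicator_of_mem hmem, show (m + n).toNat + (n - m).toNat = 2 * n by lia]
    · refine (norm_indicator_le_norm_self _ _).trans ?_
      rw [norm_mul]
      gcongr
      exact hC _ _
  simp only [sum_gaussBinom_mul_jacobiTerm hq0 hx, tsum_mul_left] at hsum
  have hprod := (tendsto_qPochhammer x hq).mul (tendsto_qPochhammer (q / x) hq)
  rw [thetaProd, tendsto_nhds_unique hprod hsum,
    mul_inv_cancel_left₀ (qPochhammerInf_self_ne_zero hq)]

end JacobiTripleProduct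

section ThetaQuotients

variable {𝕜 : Type*} [NormedField 𝕜] {a q x : 𝕜}

/-- The theta product `thetaProd q x` with its second factor `(q / x; q)_∞` cut off after `n`
factors. -/
def truncThetaProd (q x : 𝕜) (n : ℕ) : 𝕜 := qPochhammer (q / x) q n * qPochhammerInf x q

variable [CompleteSpace 𝕜]

lemma qPochhammerInf_div_pow (hq0 : q ≠ 0) (hq : ‖q‖ < 1) (hx : x ≠ 0) (n : ℕ) :
    qPochhammerInf (x / q ^ n) q = (-x) ^ n / q ^ (n + 1).choose 2 * truncThetaProd q x n := by
  rw [← qPochhammer_mul_qPochhammerInf (x / q ^ n) hq n, div_mul_cancel₀ x (pow_ne_zero n hq0),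
    qPochhammer_div_pow hq0 hx, mul_assoc, truncThetaProd]

lemma tendsto_truncThetaProd_prod (hq : ‖q‖ < 1) (hx : x ≠ 0) :
    Tendsto (fun v : ℕ × 𝕜 => truncThetaProd q v.2 v.1) (atTop ×ˢ 𝓝 x) (𝓝 (thetaProd q x)) := by
  have hdiv : Tendsto (fun v : ℕ × 𝕜 => (v.1, q / v.2)) (atTop ×ˢ 𝓝 x) (atTop ×ˢ 𝓝 (q / x)) :=
    tendsto_fst.prodMk (tendsto_const_nhds.div tendsto_snd hx)
  rw [thetaProd, mul_comm]
  exact ((tendsto_qPochhammer_prod (q / x) hq).comp hdiv).mul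
    (((continuous_qPochhammerInf hq).tendsto x).comp tendsto_snd)

lemma eventually_qPochhammerInf_div_pow_ne_zero (hq0 : q ≠ 0) (hq : ‖q‖ < 1) (hx : x ≠ 0)
    (hxq : ∀ m : ℤ, x ≠ q ^ m) :
    ∀ᶠ v : ℕ × 𝕜 in atTop ×ˢ 𝓝 x, qPochhammerInf (v.2 / q ^ v.1) q ≠ 0 := by
  filter_upwards [tendsto_snd.eventually_ne hx,
    (tendsto_truncThetaProd_prod hq hx).eventually_ne (thetaProd_ne_zero hq hxq)] with v hv htrunc
  rw [qPochhammerInf_div_pow hq0 hq hv]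
  exact mul_ne_zero (div_ne_zero (pow_ne_zero _ (neg_ne_zero.2 hv)) (pow_ne_zero _ hq0)) htrunc

lemma pow_mul_qPochhammerInf_div_pow_div (hq0 : q ≠ 0) (hq : ‖q‖ < 1) (ha : a ≠ 0) (hx : x ≠ 0)
    (n : ℕ) :
    a ^ n * (qPochhammerInf (x / q ^ n) q / qPochhammerInf (a * x / q ^ n) q) =
      truncThetaProd q x n / truncThetaProd q (a * x) n := by
  rw [qPochhammerInf_div_pow hq0 hq hx, qPochhammerInf_div_pow hq0 hq (mul_ne_zero ha hx),
    ← mul_neg, mul_pow, mul_div_assoc (a ^ n), mul_assoc (a ^ n), ← mul_div_assoc (a ^ n),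
    mul_div_mul_left _ _ (pow_ne_zero n ha),
    mul_div_mul_left _ _ (div_ne_zero (pow_ne_zero n (neg_ne_zero.2 hx)) (pow_ne_zero _ hq0))]

theorem tendsto_pow_mul_qPochhammerInf_div_pow_div_prod (hq0 : q ≠ 0) (hq : ‖q‖ < 1) (ha : a ≠ 0)
    (hx : x ≠ 0) (haxq : ∀ m : ℤ, a * x ≠ q ^ m) :
    Tendsto (fun v : ℕ × 𝕜 =>
        a ^ v.1 * (qPochhammerInf (v.2 / q ^ v.1) q / qPochhammerInf (a * v.2 / q ^ v.1) q))
      (atTop ×ˢ 𝓝 x) (𝓝 (thetaProd q x / thetaProd q (a * x))) := by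
  have hmul : Tendsto (fun v : ℕ × 𝕜 => (v.1, a * v.2)) (atTop ×ˢ 𝓝 x) (atTop ×ˢ 𝓝 (a * x)) :=
    tendsto_fst.prodMk (tendsto_snd.const_mul a)
  refine ((tendsto_truncThetaProd_prod hq hx).div
    ((tendsto_truncThetaProd_prod hq (mul_ne_zero ha hx)).comp hmul)
    (thetaProd_ne_zero hq haxq)).congr' ?_
  filter_upwards [tendsto_snd.eventually_ne hx] with v hv
  exact (pow_mul_qPochhammerInf_div_pow_div hq0 hq ha hv v.1).symm

end ThetaQuotients

section Characters

variable {q : ℝ}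

lemma norm_ofReal_inv_lt_one (hq : 1 < q) : ‖(q : ℂ)⁻¹‖ < 1 := by
  rw [norm_inv, norm_real, Real.norm_of_nonneg (by linarith)]
  exact inv_lt_one_of_one_lt₀ hq

lemma theta_eq_tsum_jacobiTerm (q : ℝ) (x : ℂ) : theta q x = ∑' m, jacobiTerm (q : ℂ)⁻¹ x m := by
  simp only [theta, jacobiTerm, zpow_neg, inv_zpow]

lemma theta_div_theta (hq : 1 < q) {x y : ℂ} (hx : x ≠ 0) (hy : y ≠ 0) :
    theta q x / theta q y = thetaProd (q : ℂ)⁻¹ x / thetaProd (q : ℂ)⁻¹ y := by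
  have hp0 : (q : ℂ)⁻¹ ≠ 0 := inv_ne_zero (ofReal_ne_zero.2 (by linarith))
  have hp := norm_ofReal_inv_lt_one hq
  rw [theta_eq_tsum_jacobiTerm, theta_eq_tsum_jacobiTerm, tsum_jacobiTerm hp0 hp hx,
    tsum_jacobiTerm hp0 hp hy, mul_div_mul_left _ _ (qPochhammerInf_self_ne_zero hp)]

lemma exp_mul_log_inv (hq : 0 < q) (s : ℝ) :
    exp (s * Real.log q⁻¹) = ((q⁻¹ ^ s : ℝ) : ℂ) := by
  rw [Real.rpow_def_of_pos (inv_pos.2 hq), mul_comm (Real.log _)]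
  push_cast
  rfl

lemma exp_natCast_add_mul_log_inv (hq : 0 < q) (c : ℂ) (j : ℕ) :
    exp ((j + c) * Real.log q⁻¹) = exp (c * Real.log q⁻¹) * (q : ℂ)⁻¹ ^ j := by
  rw [add_mul, exp_add, mul_comm, ← ofReal_natCast, exp_mul_log_inv hq, Real.rpow_natCast,
    ofReal_pow, ofReal_inv]

lemma zc_one_sub_inv_mul (hq : q ≠ 1) (t : ℝ) (x : ℂ) :
    zc q ((1 - q⁻¹) * t) x = x / t + (q : ℂ)⁻¹ := by
  have hne : 1 - (q : ℂ)⁻¹ ≠ 0 := sub_ne_zero.2 (inv_ne_one.2 (ofReal_ne_one.2 hq)).symm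
  rw [zc]
  push_cast
  rw [mul_div_mul_left _ _ hne]

lemma echar_one_sub_inv_mul (hq : 1 < q) (t : ℝ) {c x : ℂ}
    (hne : qPochhammerInf (exp (c * Real.log q⁻¹) * (x / t + (q : ℂ)⁻¹)) (q : ℂ)⁻¹ ≠ 0) :
    echar q ((1 - q⁻¹) * t) c x = (t : ℂ) ^ c *
      (qPochhammerInf (x / t + (q : ℂ)⁻¹) (q : ℂ)⁻¹ /
        qPochhammerInf (exp (c * Real.log q⁻¹) * (x / t + (q : ℂ)⁻¹)) (q : ℂ)⁻¹) := by
  have hp := norm_ofReal_inv_lt_one hq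
  have hterm (j : ℕ) : charTerm q ((1 - q⁻¹) * t) c x j =
      (1 - (x / t + (q : ℂ)⁻¹) * (q : ℂ)⁻¹ ^ j) /
        (1 - exp (c * Real.log q⁻¹) * (x / t + (q : ℂ)⁻¹) * (q : ℂ)⁻¹ ^ j) := by
    rw [charTerm, zc_one_sub_inv_mul hq.ne', exp_natCast_add_mul_log_inv (by linarith)]
    ring
  rw [echar, mul_div_cancel_left₀ t (sub_ne_zero.2 (inv_lt_one_of_one_lt₀ hq).ne'),
    tprod_congr hterm]
  exact congrArg _ (Multipliable.tprod_div₀ (multipliable_one_sub_mul_pow _ hp)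
    (multipliable_one_sub_mul_pow _ hp) hne)

/-- The numerator of `z(x) = (p ^ (-ξ) * x + p ^ (n + 1)) / p ^ n` at the step
`h = (1 - p) * p ^ (ξ + n)`, where `p = q⁻¹`. -/
def scaledArg (q ξ : ℝ) (n : ℕ) (x : ℂ) : ℂ :=
  ((q⁻¹ ^ (-ξ) : ℝ) : ℂ) * x + (q : ℂ)⁻¹ ^ (n + 1)

lemma div_inv_rpow_add_inv (hq : 0 < q) (ξ : ℝ) (n : ℕ) (x : ℂ) :
    x / (q⁻¹ ^ (ξ + n) : ℝ) + (q : ℂ)⁻¹ = scaledArg q ξ n x / (q : ℂ)⁻¹ ^ n := by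
  have hp := inv_pos.2 hq
  have hpn : (q : ℂ)⁻¹ ^ n ≠ 0 := pow_ne_zero n (inv_ne_zero (ofReal_ne_zero.2 hq.ne'))
  rw [scaledArg, Real.rpow_add hp, Real.rpow_natCast, Real.rpow_neg hp.le, ofReal_mul, ofReal_pow,
    ofReal_inv, ofReal_inv, pow_succ', add_div, mul_div_cancel_right₀ _ hpn, div_mul_eq_div_div,
    inv_mul_eq_div]

lemma tendsto_scaledArg_prod (hq : 1 < q) (ξ : ℝ) (x : ℂ) :
    Tendsto (fun v : ℕ × ℂ => scaledArg q ξ v.1 v.2) (atTop ×ˢ 𝓝 x)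
      (𝓝 (((q⁻¹ ^ (-ξ) : ℝ) : ℂ) * x)) := by
  have hpow : Tendsto (fun n : ℕ => (q : ℂ)⁻¹ ^ (n + 1)) atTop (𝓝 0) :=
    (tendsto_pow_atTop_nhds_zero_of_norm_lt_one (norm_ofReal_inv_lt_one hq)).comp
      (tendsto_add_atTop_nat 1)
  simpa only [add_zero] using! (tendsto_snd.const_mul _).add (hpow.comp tendsto_fst)

lemma inv_rpow_add_natCast_cpow (hq : 0 < q) (c : ℂ) (ξ : ℝ) (n : ℕ) :
    ((q⁻¹ ^ (ξ + n) : ℝ) : ℂ) ^ c =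
      exp (ξ * c * Real.log q⁻¹) * exp (c * Real.log q⁻¹) ^ n := by
  have hp := inv_pos.2 hq
  rw [cpow_def_of_ne_zero (ofReal_ne_zero.2 (Real.rpow_pos_of_pos hp _).ne'), ← ofReal_log
    (Real.rpow_pos_of_pos hp _).le, Real.log_rpow hp, ← exp_nat_mul, ← exp_add]
  push_cast
  ring_nf

lemma echar_one_sub_inv_mul_inv_rpow (hq : 1 < q) {c : ℂ} (ξ : ℝ) (n : ℕ) {x : ℂ}
    (hne : qPochhammerInf (exp (c * Real.log q⁻¹) * scaledArg q ξ n x / (q : ℂ)⁻¹ ^ n)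
      (q : ℂ)⁻¹ ≠ 0) :
    echar q ((1 - q⁻¹) * q⁻¹ ^ (ξ + n)) c x =
      exp (ξ * c * Real.log q⁻¹) * (exp (c * Real.log q⁻¹) ^ n *
        (qPochhammerInf (scaledArg q ξ n x / (q : ℂ)⁻¹ ^ n) (q : ℂ)⁻¹ /
          qPochhammerInf (exp (c * Real.log q⁻¹) * scaledArg q ξ n x / (q : ℂ)⁻¹ ^ n)
            (q : ℂ)⁻¹)) := by
  have hq0 : 0 < q := by linarith
  rw [mul_div_assoc, ← div_inv_rpow_add_inv hq0] at hne ⊢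
  rw [echar_one_sub_inv_mul hq _ hne, inv_rpow_add_natCast_cpow hq0, mul_assoc]

lemma eq_exp_mul_rpow_of_mul_eq_zpow (hq : 0 < q) {c : ℂ} {ξ : ℝ} {x : ℂ} {m : ℤ}
    (h : exp (c * Real.log q⁻¹) * (((q⁻¹ ^ (-ξ) : ℝ) : ℂ) * x) = (q : ℂ)⁻¹ ^ m) :
    x = exp (c * Real.log q) * ((q⁻¹ ^ (ξ + m) : ℝ) : ℂ) := by
  have hp := inv_pos.2 hq
  have hξ : ((q⁻¹ ^ ξ : ℝ) : ℂ) ≠ 0 := ofReal_ne_zero.2 (Real.rpow_pos_of_pos hp ξ).ne'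
  rw [Real.log_inv, ofReal_neg, mul_neg, exp_neg, Real.rpow_neg hp.le, ofReal_inv,
    inv_mul_eq_iff_eq_mul₀ (exp_ne_zero _), inv_mul_eq_iff_eq_mul₀ hξ] at h
  rw [h, Real.rpow_add hp, Real.rpow_intCast]
  push_cast
  ring

theorem tendsto_echar_prod (hq : 1 < q) (c : ℂ) (ξ : ℝ) {x : ℂ} (hx : x ≠ 0)
    (hxq : ∀ m : ℤ, x ≠ exp (c * Real.log q) * ((q⁻¹ ^ (ξ + m) : ℝ) : ℂ)) :
    Tendsto (fun v : ℕ × ℂ => echar q ((1 - q⁻¹) * q⁻¹ ^ (ξ + v.1)) c v.2) (atTop ×ˢ 𝓝 x)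
      (𝓝 (exp (ξ * c * Real.log q⁻¹) * theta q (((q⁻¹ ^ (-ξ) : ℝ) : ℂ) * x) /
        theta q (exp ((c - ξ) * Real.log q⁻¹) * x))) := by
  have hq0 : 0 < q := by linarith
  have hp0 : (q : ℂ)⁻¹ ≠ 0 := inv_ne_zero (ofReal_ne_zero.2 (by linarith))
  have hp := norm_ofReal_inv_lt_one hq
  set p : ℂ := (q : ℂ)⁻¹
  set a := exp (c * Real.log q⁻¹)
  set r : ℂ := ((q⁻¹ ^ (-ξ) : ℝ) : ℂ)
  have ha : a ≠ 0 := exp_ne_zero _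
  have hrx : r * x ≠ 0 :=
    mul_ne_zero (ofReal_ne_zero.2 (Real.rpow_pos_of_pos (inv_pos.2 hq0) _).ne') hx
  have harx (m : ℤ) : a * (r * x) ≠ p ^ m := fun h => hxq m (eq_exp_mul_rpow_of_mul_eq_zpow hq0 h)
  have hscale : exp ((c - ξ) * Real.log q⁻¹) * x = a * (r * x) := by
    rw [sub_eq_add_neg, add_mul, exp_add, ← ofReal_neg, exp_mul_log_inv hq0, mul_assoc]
  have harg : Tendsto (fun v : ℕ × ℂ => (v.1, scaledArg q ξ v.1 v.2)) (atTop ×ˢ 𝓝 x)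
      (atTop ×ˢ 𝓝 (r * x)) :=
    tendsto_fst.prodMk (tendsto_scaledArg_prod hq ξ x)
  have hmul : Tendsto (fun v : ℕ × ℂ => (v.1, a * scaledArg q ξ v.1 v.2)) (atTop ×ˢ 𝓝 x)
      (atTop ×ˢ 𝓝 (a * (r * x))) :=
    tendsto_fst.prodMk ((tendsto_scaledArg_prod hq ξ x).const_mul a)
  rw [hscale, mul_div_assoc, theta_div_theta hq hrx (mul_ne_zero ha hrx)]
  refine (((tendsto_pow_mul_qPochhammerInf_div_pow_div_prod hp0 hp ha hrx harx).comp
    harg).const_mul _).congr' ?_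
  filter_upwards [hmul.eventually
    (eventually_qPochhammerInf_div_pow_ne_zero hp0 hp (mul_ne_zero ha hrx) harx)] with v hv
  exact (echar_one_sub_inv_mul_inv_rpow hq ξ v.1 hv).symm

end Characters

theorem echar_confluence_C1_general {q : ℝ} (hq : 1 < q) (c : ℂ) (ξ : ℝ) :
    TendstoLocallyUniformlyOn
      (fun (n : ℕ) (x : ℂ) => echar q ((1 - q⁻¹) * q⁻¹ ^ (ξ + n)) c x)
      (fun x : ℂ => exp (ξ * c * Real.log q⁻¹) * theta q (((q⁻¹ ^ (-ξ) : ℝ) : ℂ) * x) /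
        theta q (exp ((c - ξ) * Real.log q⁻¹) * x))
      atTop {x | x ≠ 0 ∧ ∀ m : ℤ, x ≠ exp (c * Real.log q) * ((q⁻¹ ^ (ξ + m) : ℝ) : ℂ)} :=
  tendstoLocallyUniformlyOn_of_forall_tendsto_prod fun _ hx =>
    (tendsto_echar_prod hq c ξ hx.1 hx.2).mono_left (prod_mono le_rfl nhdsWithin_le_nhds)

/-- Along the sequence `h_n = (1-p₀)p₀^{ξ+n}` (with `ξ ∈ [0,1)` fixed), the characters
`e_c^{(q₀,h_n)}` converge, uniformly on compact subsets of `ℂ ∖ q₀^c·[0,∞)`, to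
`x ↦ p₀^{ξc}·Θ_{q₀}(p₀^{-ξ}x)/Θ_{q₀}(p₀^{c-ξ}x)`. -/
theorem echar_confluence_C1 (q0 : ℝ) (hq0 : 1 < q0) (c : ℂ) (ξ : ℝ)
    (hξ0 : 0 ≤ ξ) (hξ1 : ξ < 1)
    (K : Set ℂ) (hK : IsCompact K)
    (hKd : ∀ x ∈ K, ∀ t : ℝ, 0 ≤ t → x ≠ Complex.exp (c * Real.log q0) * (t : ℂ)) :
    TendstoUniformlyOn
      (fun (n : ℕ) (x : ℂ) => echar q0 ((1 - q0⁻¹) * Real.rpow q0⁻¹ (ξ + n)) c x)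
      (fun x : ℂ => Complex.exp ((ξ : ℂ) * c * Real.log q0⁻¹) *
        theta q0 (((Real.rpow q0⁻¹ (-ξ) : ℝ) : ℂ) * x) /
        theta q0 (Complex.exp ((c - (ξ : ℂ)) * Real.log q0⁻¹) * x))
      atTop K :=
  (tendstoLocallyUniformlyOn_iff_tendstoUniformlyOn_of_compact hK).1 <|
    (echar_confluence_C1_general hq0 c ξ).mono fun x hx =>
      ⟨by simpa using hKd x hx 0 le_rfl, fun _ => hKd x hx _ (by positivity)⟩
end
end
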